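/- Let λ = log₂(4/3). Then for every real p with 1/2 ≤ p ≤ 1, one has p^{−λ} + p^{1−λ} ≤ 2. -/

import Mathlib

/-!
Multiplying by `p ^ l`, where `l = logb 2 (4 / 3)`, turns the claim into `(1 + p) / 2 ≤ p ^ l`.
Since `0 ≤ l ≤ 1`, the function `p ↦ p ^ l` is concave, so on `[1/2, 1]` it lies above its chord.
That chord is exactly `(1 + p) / 2`, because `(1/2) ^ l = 3/4` and `1 ^ l = 1`.
-/

section ConvexConcave

variable {𝕜 E β : Type*} [Semiring 𝕜] [PartialOrder 𝕜] [AddCommMonoid E] [SMul 𝕜 E]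
  [AddCommMonoid β] [PartialOrder β] [IsOrderedAddMonoid β] [SMul 𝕜 β] [PosSMulMono 𝕜 β]

theorem le_on_segment_of_convexOn_of_concaveOn {s : Set E} {f g : E → β} {x y z : E}
    (hf : ConvexOn 𝕜 s f) (hg : ConcaveOn 𝕜 s g) (hx : x ∈ s) (hy : y ∈ s)
    (hfgx : f x ≤ g x) (hfgy : f y ≤ g y) (hz : z ∈ segment 𝕜 x y) : f z ≤ g z := by
  obtain ⟨a, b, ha, hb, hab, rfl⟩ := hz
  calc
    f (a • x + b • y) ≤ a • f x + b • f y := hf.2 hx hy ha hb hab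
    _ ≤ a • g x + b • g y := by gcongr
    _ ≤ g (a • x + b • y) := hg.2 hx hy ha hb hab

end ConvexConcave

theorem mul_add_le_rpow_of_mem_Icc {l m c a b x : ℝ} (hl0 : 0 ≤ l) (hl1 : l ≤ 1) (ha : 0 ≤ a)
    (hma : m * a + c ≤ a ^ l) (hmb : m * b + c ≤ b ^ l) (hx : x ∈ Set.Icc a b) :
    m * x + c ≤ x ^ l := by
  have hab : a ≤ b := hx.1.trans hx.2
  have h_affine : ConvexOn ℝ (Set.Ici 0) fun t : ℝ ↦ m * t + c :=
    ((LinearMap.mulLeft ℝ m).convexOn (convex_Ici 0)).add_const c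
  exact le_on_segment_of_convexOn_of_concaveOn h_affine (Real.concaveOn_rpow hl0 hl1)
    ha (ha.trans hab) hma hmb (Icc_subset_segment hx)

theorem rpow_neg_add_rpow_one_sub {p : ℝ} (hp : 0 < p) (l : ℝ) :
    p ^ (-l) + p ^ (1 - l) = (1 + p) / p ^ l := by
  rw [Real.rpow_neg hp.le, Real.rpow_sub hp, Real.rpow_one, add_div, one_div]

theorem inv_rpow_logb {b x : ℝ} (hb : 0 < b) (hb1 : b ≠ 1) (hx : 0 < x) :
    b⁻¹ ^ Real.logb b x = x⁻¹ := by
  rw [Real.inv_rpow hb.le, Real.rpow_logb hb hb1 hx]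

theorem rpow_lambda_bound
    (p : ℝ) (hp : 1 / 2 ≤ p) (hp1 : p ≤ 1) :
    p ^ (-(Real.logb 2 (4 / 3))) + p ^ (1 - Real.logb 2 (4 / 3)) ≤ 2 := by
  have hp0 : 0 < p := by linarith
  have hl0 : 0 ≤ Real.logb 2 (4 / 3) := Real.logb_nonneg (by norm_num) (by norm_num)
  have hl1 : Real.logb 2 (4 / 3) ≤ 1 := by
    rw [Real.logb_le_iff_le_rpow (by norm_num) (by norm_num)]
    norm_num
  have h_half : (1 / 2 : ℝ) ^ Real.logb 2 (4 / 3) = 3 / 4 := by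
    rw [one_div, inv_rpow_logb (by norm_num) (by norm_num) (by norm_num), inv_div]
  have h_chord : 1 / 2 * p + 1 / 2 ≤ p ^ Real.logb 2 (4 / 3) := by
    refine mul_add_le_rpow_of_mem_Icc hl0 hl1 (by norm_num) ?_ ?_ ⟨hp, hp1⟩
    · rw [h_half]
      norm_num
    · rw [Real.one_rpow]
      norm_num
  rw [rpow_neg_add_rpow_one_sub hp0, div_le_iff₀ (Real.rpow_pos_of_pos hp0 _)]
  linarith
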